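/- Let S be a numerical semigroup minimally generated by n_1 < … < n_d, set m_i = n_d − n_i for 1 ≤ i ≤ d−1, g = gcd(m_1,…,m_{d−1}), let c be the conductor of T = ⟨m_1/g,…,m_{d−1}/g⟩ and L = m_1·m_2·((g·c + d·m_1)/m_{d−1} + d) − n_d. Then for every integer j > L, the shifted semigroup S+j = ⟨n_1+j,…,n_d+j⟩ is homogeneous (every element of AP(S+j, n_1+j) has all its factorizations with respect to n_1+j,…,n_d+j of the same length) and T(S+j) = ∅ (equivalently, the tangent cone of S+j is Cohen–Macaulay). -/

import Mathlib

open scoped BigOperators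

/-- The value `Σ aᵢ nᵢ` of a tuple of coefficients `a` w.r.t. the generators `n`. -/
def sval {d : ℕ} (n : Fin d → ℕ) (a : Fin d → ℕ) : ℕ := ∑ i, a i * n i

/-- The total length `Σ aᵢ` of a factorization. -/
def tlen {d : ℕ} (a : Fin d → ℕ) : ℕ := ∑ i, a i

/-- The submonoid of `ℕ` generated by `n`. -/
def gen {d : ℕ} (n : Fin d → ℕ) : Set ℕ := {s : ℕ | ∃ a : Fin d → ℕ, s = sval n a}

/-- The Apéry set of the semigroup generated by `n` with respect to `s`:
elements `x` of the semigroup such that `x - s` is not in the semigroup. -/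
def Apery {d : ℕ} (n : Fin d → ℕ) (s : ℕ) : Set ℕ :=
  {x : ℕ | x ∈ gen n ∧ ¬ ∃ y ∈ gen n, x = s + y}

/-- A subset `T` is homogeneous if every nonzero element of `T` has all its
factorizations of the same length. -/
def HomogSet {d : ℕ} (n : Fin d → ℕ) (T : Set ℕ) : Prop :=
  ∀ t ∈ T, t ≠ 0 → ∀ a b : Fin d → ℕ, sval n a = t → sval n b = t → tlen a = tlen b

/-- The order of `s`: the maximal length of a factorization of `s`. -/
noncomputable def ordS {d : ℕ} (n : Fin d → ℕ) (s : ℕ) : ℕ :=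
  sSup {l : ℕ | ∃ a : Fin d → ℕ, sval n a = s ∧ tlen a = l}

/-- The torsion set of the semigroup generated by `n`, with respect to the
generator of index `i0` (the smallest generator). -/
noncomputable def Torsion {d : ℕ} (n : Fin d → ℕ) (i0 : Fin d) : Set ℕ :=
  {s : ℕ | s ∈ gen n ∧ ∃ c : ℕ, 0 < c ∧ ordS n s + c < ordS n (s + c * n i0)}

/-- `n` is a minimal system of generators: any expression of a generator as a
nonnegative combination of the generators has total coefficient sum one. -/
def MinGen {d : ℕ} (n : Fin d → ℕ) : Prop :=
  ∀ r : Fin d, ∀ a : Fin d → ℕ, n r = sval n a → tlen a = 1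

/-- `n` generates a numerical semigroup (cofinite in `ℕ`). -/
def IsNumerical {d : ℕ} (n : Fin d → ℕ) : Prop := {x : ℕ | x ∉ gen n}.Finite

/-- The monomial `x^a = Π xᵢ^{aᵢ}`. -/
noncomputable def monom (k : Type*) [CommRing k] {d : ℕ} (a : Fin d → ℕ) :
    MvPolynomial (Fin d) k :=
  ∏ i, (MvPolynomial.X i : MvPolynomial (Fin d) k) ^ a i

/-- The toric ideal `I_S`: kernel of `k[x₁,…,x_d] → k[t]`, `xᵢ ↦ t^{nᵢ}`. -/
noncomputable def toricIdeal (k : Type*) [CommRing k] {d : ℕ} (n : Fin d → ℕ) :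
    Ideal (MvPolynomial (Fin d) k) :=
  RingHom.ker (MvPolynomial.aeval (R := k)
    (fun i => (Polynomial.X : Polynomial k) ^ n i)).toRingHom

/-- `E` is a minimal generating set of the ideal `I`: it spans `I` and no
proper subset spans `I`. -/
def IsMinGenSet {R : Type*} [CommRing R] (I : Ideal R) (E : Set R) : Prop :=
  Ideal.span E = I ∧ ∀ E' : Set R, E' ⊂ E → Ideal.span E' ≠ I

/-- Membership of an integer in the semigroup generated by `n`. -/
def memZ {d : ℕ} (n : Fin d → ℕ) (z : ℤ) : Prop := ∃ x ∈ gen n, (x : ℤ) = z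

/-- A numerical semigroup with Frobenius number `F = max (ℤ ∖ S)` is symmetric
if for every integer `z`, `z ∈ S ↔ F - z ∉ S`. -/
def IsSymmetric {d : ℕ} (n : Fin d → ℕ) : Prop :=
  ∃ F : ℤ, ¬ memZ n F ∧ (∀ z : ℤ, F < z → memZ n z) ∧
    ∀ z : ℤ, memZ n z ↔ ¬ memZ n (F - z)

/-- A numerical semigroup with Frobenius number `F = max (ℤ ∖ S)` is
pseudo-symmetric if `F` is even and for every integer `z`,
`z ∈ S ↔ (z ≠ F/2 ∧ F - z ∉ S)`. -/
def IsPseudoSymmetric {d : ℕ} (n : Fin d → ℕ) : Prop :=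
  ∃ F : ℤ, ¬ memZ n F ∧ (∀ z : ℤ, F < z → memZ n z) ∧ F % 2 = 0 ∧
    ∀ z : ℤ, memZ n z ↔ (z ≠ F / 2 ∧ ¬ memZ n (F - z))

/-- The generators `q·m₁,…,q·m_d, p·n₁,…,p·n_e` of the gluing of two numerical
semigroups. -/
def glueGen {d e : ℕ} (mg : Fin d → ℕ) (ng : Fin e → ℕ) (p q : ℕ) :
    Fin (d + e) → ℕ :=
  Fin.append (fun i => q * mg i) (fun i => p * ng i)

/-!
Write `v i = n i + j`, `m i = n_d - n i` and `N = n_d + j`, so that `v i + m i = N` and every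
coefficient tuple `a` satisfies `sval v a + sval m a = N * tlen a`. Hence two factorizations `a`,
`b` of one element with `tlen b < tlen a` force `sval m a ≥ N`, which is huge when `j` is. A huge
element of the semigroup of the `m i` is a large multiple of the largest gap `m₁` plus a bounded
remainder, and writing it this way takes at most `tlen a` summands if `a` did not use `m₁`. Since
the gap of `n_d` is `0`, padding with `n_d` restores the length `tlen a` exactly. So a
factorization that is not the shortest can always be exchanged for one of the same length that
uses the smallest generator, which yields both homogeneity of the Apéry set and the absence of
torsion.
-/

section Factorizations

variable {d : ℕ} {m v a b : Fin d → ℕ} {l : Fin d}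

lemma sval_add (v a b : Fin d → ℕ) : sval v (a + b) = sval v a + sval v b :=
  add_dotProduct a b v

lemma tlen_add (a b : Fin d → ℕ) : tlen (a + b) = tlen a + tlen b :=
  Finset.sum_add_distrib

lemma sval_single (v : Fin d → ℕ) (i : Fin d) (q : ℕ) : sval v (Pi.single i q) = q * v i :=
  single_dotProduct v q i

lemma tlen_single (i : Fin d) (q : ℕ) : tlen (Pi.single i q : Fin d → ℕ) = q := by
  simp only [tlen, Finset.sum_pi_single', Finset.mem_univ, if_true]

lemma tlen_mul_le_sval {w : ℕ} (hw : ∀ i, a i ≠ 0 → w ≤ m i) : tlen a * w ≤ sval m a := by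
  rw [tlen, Finset.sum_mul]
  refine Finset.sum_le_sum fun i _ => ?_
  obtain hi | hi := eq_or_ne (a i) 0
  · simp only [hi, zero_mul, le_refl]
  · exact Nat.mul_le_mul_left _ (hw i hi)

lemma sval_le_tlen_mul {p : ℕ} (hp : ∀ i, a i ≠ 0 → m i ≤ p) : sval m a ≤ tlen a * p := by
  rw [tlen, Finset.sum_mul]
  refine Finset.sum_le_sum fun i _ => ?_
  obtain hi | hi := eq_or_ne (a i) 0
  · simp only [hi, zero_mul, le_refl]
  · exact Nat.mul_le_mul_left _ (hp i hi)

lemma sval_eq_mul_sval_div {g : ℕ} (hg : ∀ i, g ∣ m i) (a : Fin d → ℕ) :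
    sval m a = g * sval (fun i => m i / g) a := by
  simp only [sval, Finset.mul_sum, mul_left_comm g, Nat.mul_div_cancel' (hg _)]

lemma exists_sval_eq_apply_eq_zero (hl : m l = 0) (b : Fin d → ℕ) :
    ∃ b' : Fin d → ℕ, sval m b' = sval m b ∧ b' l = 0 := by
  refine ⟨Function.update b l 0, Finset.sum_congr rfl fun i _ => ?_, Function.update_self ..⟩
  obtain rfl | hi := eq_or_ne i l
  · simp only [hl, mul_zero]
  · rw [Function.update_of_ne hi]

lemma sval_add_sval_eq_mul_tlen {N : ℕ} (hN : ∀ i, v i + m i = N) (a : Fin d → ℕ) :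
    sval v a + sval m a = N * tlen a := by
  simp only [sval, tlen, ← Finset.sum_add_distrib, ← mul_add, hN, ← Finset.sum_mul]
  exact mul_comm _ _

lemma le_sval_of_tlen_lt {N : ℕ} (hN : ∀ i, v i + m i = N) (hab : sval v a = sval v b)
    (hlt : tlen b < tlen a) : N ≤ sval m a := by
  have ha := sval_add_sval_eq_mul_tlen hN a
  have hb := sval_add_sval_eq_mul_tlen hN b
  have hlen : N * (tlen b + 1) ≤ N * tlen a := Nat.mul_le_mul_left N hlt
  rw [mul_add_one] at hlen
  omega

end Factorizations

section Order

variable {d : ℕ} {v : Fin d → ℕ}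

lemma bddAbove_tlen (hv : ∀ i, 0 < v i) (s : ℕ) :
    BddAbove {l | ∃ a, sval v a = s ∧ tlen a = l} := by
  refine ⟨s, ?_⟩
  rintro _ ⟨a, rfl, rfl⟩
  exact (mul_one (tlen a)).symm.trans_le (tlen_mul_le_sval fun i _ => hv i)

lemma tlen_le_ordS (hv : ∀ i, 0 < v i) (a : Fin d → ℕ) : tlen a ≤ ordS v (sval v a) :=
  le_csSup (bddAbove_tlen hv _) ⟨a, rfl, rfl⟩

lemma exists_tlen_eq_ordS (hv : ∀ i, 0 < v i) {s : ℕ} (hs : s ∈ gen v) :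
    ∃ a, sval v a = s ∧ tlen a = ordS v s := by
  obtain ⟨a, rfl⟩ := hs
  exact Nat.sSup_mem (s := {l | ∃ b, sval v b = sval v a ∧ tlen b = l}) ⟨_, a, rfl, rfl⟩
    (bddAbove_tlen hv _)

end Order

/-- Every factorization `a` that is longer than some factorization of the same element can be
exchanged for one of the same length that uses the `i`-th generator; the new factorization is
written `e + Pi.single i 1` so that this generator can be split off. -/
def LongFactorizationsUse {d : ℕ} (v : Fin d → ℕ) (i : Fin d) : Prop :=
  ∀ a b : Fin d → ℕ, sval v a = sval v b → tlen b < tlen a →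
    ∃ e : Fin d → ℕ, sval v (e + Pi.single i 1) = sval v a ∧ tlen (e + Pi.single i 1) = tlen a

namespace LongFactorizationsUse

variable {d : ℕ} {v : Fin d → ℕ} {i : Fin d}

lemma tlen_le_of_sval_mem_apery (h : LongFactorizationsUse v i) {a b : Fin d → ℕ}
    (ha : sval v a ∈ Apery v (v i)) (hab : sval v a = sval v b) : tlen a ≤ tlen b := by
  by_contra! hlt
  obtain ⟨e, he, -⟩ := h a b hab hlt
  refine ha.2 ⟨sval v e, ⟨e, rfl⟩, ?_⟩
  rw [← he, sval_add, sval_single, one_mul, add_comm]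

theorem homogSet_apery (h : LongFactorizationsUse v i) : HomogSet v (Apery v (v i)) := by
  rintro t ht - a b rfl hb
  exact le_antisymm (h.tlen_le_of_sval_mem_apery ht hb.symm)
    (h.tlen_le_of_sval_mem_apery (hb.symm ▸ ht) hb)

lemma tlen_le_ordS_add (h : LongFactorizationsUse v i) (hv : ∀ i, 0 < v i) {s : ℕ}
    (hs : s ∈ gen v) (c : ℕ) (a : Fin d → ℕ) (ha : sval v a = s + c * v i) :
    tlen a ≤ ordS v s + c := by
  obtain ⟨b, hb, hblen⟩ := exists_tlen_eq_ordS hv hs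
  induction c generalizing a with
  | zero =>
    rw [zero_mul, add_zero] at ha
    exact ha ▸ tlen_le_ordS hv a
  | succ c ih =>
    by_contra! hlt
    obtain ⟨e, he, helen⟩ := h a (b + Pi.single i (c + 1))
      (by rw [ha, sval_add, sval_single, hb]) (by rwa [tlen_add, tlen_single, hblen])
    rw [sval_add, sval_single, one_mul, ha, add_one_mul, ← add_assoc] at he
    rw [tlen_add, tlen_single] at helen
    have := ih e (Nat.add_right_cancel he)
    omega

theorem torsion_eq_empty (h : LongFactorizationsUse v i) (hv : ∀ i, 0 < v i) :
    Torsion v i = ∅ := by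
  refine Set.eq_empty_iff_forall_notMem.mpr ?_
  rintro s ⟨hs, c, -, hlt⟩
  have hsc : s + c * v i ∈ gen v := by
    obtain ⟨b, rfl⟩ := hs
    exact ⟨b + Pi.single i c, by rw [sval_add, sval_single]⟩
  obtain ⟨a, ha, halen⟩ := exists_tlen_eq_ordS hv hsc
  exact hlt.not_ge (halen ▸ h.tlen_le_ordS_add hv hs c a ha)

end LongFactorizationsUse

section Conductor

variable {d : ℕ} {m : Fin d → ℕ}

lemma exists_Ici_subset_gen_of_gcd_eq_one {μ : Fin d → ℕ} {s : Finset (Fin d)}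
    (hs : s.gcd μ = 1) : ∃ c, Set.Ici c ⊆ gen μ := by
  obtain ⟨c, hc⟩ := Nat.exists_mem_closure_of_ge (Set.range μ)
  have hgcd : Nat.setGcd (Set.range μ) ∣ 1 :=
    hs ▸ Finset.dvd_gcd fun i _ => Nat.setGcd_dvd_of_mem ⟨i, rfl⟩
  refine ⟨c, fun x hx => ?_⟩
  obtain ⟨a, rfl⟩ :=
    AddSubmonoid.exists_of_mem_closure_range μ x (hc x hx (hgcd.trans (one_dvd x)))
  exact ⟨a, rfl⟩

lemma Ici_sInf_subset_gen_div_gcd {s : Finset (Fin d)} {i : Fin d} (hi : i ∈ s) (hmi : m i ≠ 0) :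
    Set.Ici (sInf {c | ∀ x, c ≤ x → x ∈ gen fun i => m i / s.gcd m}) ⊆
      gen fun i => m i / s.gcd m :=
  Nat.sInf_mem (s := {c | Set.Ici c ⊆ gen fun i => m i / s.gcd m})
    (exists_Ici_subset_gen_of_gcd_eq_one (Finset.gcd_div_eq_one hi hmi))

lemma exists_sval_add_succ_mul_eq {g c : ℕ} {i : Fin d} (hg : ∀ i, g ∣ m i)
    (hc : Set.Ici c ⊆ gen fun i => m i / g) (hmi : 0 < m i) {a : Fin d → ℕ}
    (ha : g * c + m i ≤ sval m a) :
    ∃ (q : ℕ) (b : Fin d → ℕ),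
      sval m b + (q + 1) * m i = sval m a ∧ sval m b ≤ g * c + m i := by
  have hg0 : 0 < g := Nat.pos_of_dvd_of_pos (hg i) hmi
  obtain ⟨x, hx⟩ := hg i
  have hx0 : 0 < x := Nat.pos_of_mul_pos_left (hx ▸ hmi)
  rw [sval_eq_mul_sval_div hg a, hx, ← mul_add] at ha ⊢
  obtain ⟨k, hk⟩ := Nat.exists_eq_add_of_le (Nat.le_of_mul_le_mul_left ha hg0)
  obtain ⟨b, hb⟩ := hc (Set.mem_Ici.mpr (Nat.le_add_right c (k % x)))
  refine ⟨k / x, b, ?_, ?_⟩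
  · rw [sval_eq_mul_sval_div hg b, ← hb, hk]
    linear_combination g * Nat.mod_add_div k x
  · rw [sval_eq_mul_sval_div hg b, ← hb]
    gcongr
    exact (Nat.mod_lt k hx0).le

end Conductor

section Exchange

variable {d : ℕ} {m v : Fin d → ℕ} {i₀ l : Fin d} {p w : ℕ}

-- Dividing by `m * p * w`: `q ≤ M / m` and `t ≤ r / w ≤ M / (m * p)`, while
-- `M / m + M / (m * p) = M * (p + 1) / (m * p) ≤ M / p ≤ k`.
lemma add_le_of_mul_mul_le {m q t k r M : ℕ} (hp : 0 < p) (hpm : p < m) (hw : 0 < w)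
    (hq : q * m ≤ M) (ht : t * w ≤ r) (hk : M ≤ k * p) (hr : m * p * r ≤ M * w) :
    q + t ≤ k := by
  have hm : 0 < m := hp.trans hpm
  refine Nat.le_of_mul_le_mul_right (c := m * p * w) ?_ (by positivity)
  calc (q + t) * (m * p * w)
      = q * m * (p * w) + m * p * (t * w) := by ring
    _ ≤ M * (p * w) + m * p * r := by gcongr
    _ ≤ M * (p * w) + M * w := by gcongr
    _ = M * ((p + 1) * w) := by ring
    _ ≤ k * p * (m * w) := by gcongr; exact hpm
    _ = k * (m * p * w) := by ring

lemma exists_add_single_of_sval_add_succ_mul_eq (hl : m l = 0) (hw0 : 0 < w)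
    (hw : ∀ i, i ≠ l → w ≤ m i) (hpm : p < m i₀) {a b : Fin d → ℕ} {q : ℕ}
    (ha : sval m a ≤ tlen a * p) (hb : sval m b + (q + 1) * m i₀ = sval m a)
    (hbound : m i₀ * p * sval m b ≤ sval m a * w) :
    ∃ e : Fin d → ℕ,
      sval m (e + Pi.single i₀ 1) = sval m a ∧ tlen (e + Pi.single i₀ 1) = tlen a := by
  have hp : 0 < p := by
    have hpos : 0 < (q + 1) * m i₀ := Nat.mul_pos q.succ_pos (by omega)
    exact Nat.pos_of_mul_pos_left (by omega : 0 < tlen a * p)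
  obtain ⟨b', hb', hb'l⟩ := exists_sval_eq_apply_eq_zero hl b
  rw [← hb'] at hb hbound
  have hlen : q + 1 + tlen b' ≤ tlen a := by
    have ht : tlen b' * w ≤ sval m b' :=
      tlen_mul_le_sval fun i hi => hw i fun hil => hi (hil ▸ hb'l)
    exact add_le_of_mul_mul_le hp hpm hw0 (by omega) ht ha hbound
  refine ⟨b' + Pi.single i₀ q + Pi.single l (tlen a - (q + 1 + tlen b')), ?_, ?_⟩
  · simp only [sval_add, sval_single, hl]
    linarith
  · simp only [tlen_add, tlen_single]
    omega

theorem longFactorizationsUse_of_add_eq {g c N : ℕ} (hN : ∀ i, v i + m i = N) (hl : m l = 0)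
    (hw0 : 0 < w) (hw : ∀ i, i ≠ l → w ≤ m i) (hp : ∀ i, i ≠ i₀ → m i ≤ p) (hpm : p < m i₀)
    (hg : ∀ i, g ∣ m i) (hc : Set.Ici c ⊆ gen fun i => m i / g)
    (hbound : m i₀ * p * (g * c + m i₀) ≤ N * w) : LongFactorizationsUse v i₀ := by
  intro a b hab hlt
  obtain ha₀ | ha₀ := (Nat.eq_zero_or_pos (a i₀)).symm
  · have hle : Pi.single i₀ 1 ≤ a := update_le_iff.mpr ⟨ha₀, fun _ _ => Nat.zero_le _⟩
    exact ⟨a - Pi.single i₀ 1, by rw [tsub_add_cancel_of_le hle], by rw [tsub_add_cancel_of_le hle]⟩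
  have hNa : N ≤ sval m a := le_sval_of_tlen_lt hN hab hlt
  have hap : sval m a ≤ tlen a * p :=
    sval_le_tlen_mul fun i hi => hp i fun h => hi (h ▸ ha₀)
  have hm₀ : 0 < m i₀ := by omega
  have hp0 : 0 < p := by
    have := hN i₀
    exact Nat.pos_of_mul_pos_left (by omega : 0 < tlen a * p)
  have hbound_a : m i₀ * p * (g * c + m i₀) ≤ sval m a * w := hbound.trans (by gcongr)
  have hlarge : g * c + m i₀ ≤ sval m a := by
    have hwm : w ≤ m i₀ * p :=
      (hw i₀ fun h => by simp only [h, hl, lt_self_iff_false] at hm₀).trans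
        (Nat.le_mul_of_pos_right _ hp0)
    refine Nat.le_of_mul_le_mul_left (le_trans ?_ (hbound_a.trans_eq (mul_comm _ _))) hw0
    gcongr
  obtain ⟨q, r, hr, hrc⟩ := exists_sval_add_succ_mul_eq hg hc hm₀ hlarge
  obtain ⟨e, hesval, helen⟩ := exists_add_single_of_sval_add_succ_mul_eq hl hw0 hw hpm hap hr
    (le_trans (by gcongr) hbound_a)
  have ha := sval_add_sval_eq_mul_tlen hN a
  have he := sval_add_sval_eq_mul_tlen hN (e + Pi.single i₀ 1)
  exact ⟨e, by rw [helen] at he; omega, helen⟩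

end Exchange

lemma mul_mul_add_le_of_rat_bound {m₁ m₂ w K d N : ℕ} (hd : 0 < d) (hw : 0 < w)
    (h : (m₁ : ℚ) * m₂ * ((K + d * m₁) / w + d) ≤ N) : m₁ * m₂ * (K + m₁) ≤ N * w := by
  have hone : (1 : ℚ) ≤ d := by exact_mod_cast hd
  have hle : (m₁ : ℚ) * m₂ * ((K + m₁) / w) ≤ N := by
    refine le_trans ?_ h
    gcongr
    calc ((K : ℚ) + m₁) / w
        ≤ (K + d * m₁) / w := by gcongr; exact le_mul_of_one_le_left m₁.cast_nonneg hone
      _ ≤ (K + d * m₁) / w + d := le_add_of_nonneg_right d.cast_nonneg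
  rw [← mul_div_assoc, div_le_iff₀ (by exact_mod_cast hw)] at hle
  exact_mod_cast hle

section Shift

variable {d : ℕ} {n : Fin d → ℕ} {g c j : ℕ}

lemma val_lt_of_ne_last {i : Fin d} (hi : i ≠ ⟨d - 1, Nat.sub_one_lt_of_lt i.isLt⟩) :
    (i : ℕ) < d - 1 :=
  lt_of_le_of_ne (Nat.le_sub_one_of_lt i.isLt) fun h => hi (Fin.ext h)

theorem longFactorizationsUse_add (hd : 1 < d) (hmono : StrictMono n)
    (hg : ∀ i, g ∣ n ⟨d - 1, by omega⟩ - n i)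
    (hc : Set.Ici c ⊆ gen fun i => (n ⟨d - 1, by omega⟩ - n i) / g)
    (hj : (n ⟨d - 1, by omega⟩ - n ⟨0, by omega⟩) * (n ⟨d - 1, by omega⟩ - n ⟨1, by omega⟩) *
        (g * c + (n ⟨d - 1, by omega⟩ - n ⟨0, by omega⟩)) ≤
      (n ⟨d - 1, by omega⟩ + j) * (n ⟨d - 1, by omega⟩ - n ⟨d - 2, by omega⟩)) :
    LongFactorizationsUse (fun i => n i + j) ⟨0, by omega⟩ := by
  have hmax (i : Fin d) : n i ≤ n ⟨d - 1, by omega⟩ :=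
    hmono.monotone (Nat.le_sub_one_of_lt i.isLt)
  have hfirst : n ⟨0, by omega⟩ < n ⟨1, by omega⟩ := hmono Nat.zero_lt_one
  have hlast : n ⟨d - 2, by omega⟩ < n ⟨d - 1, by omega⟩ := hmono (Fin.mk_lt_mk.mpr (by omega))
  have hsecond (i : Fin d) (hi : i ≠ ⟨0, by omega⟩) : n ⟨1, by omega⟩ ≤ n i :=
    hmono.monotone (Nat.pos_of_ne_zero fun h => hi (Fin.ext h))
  have hpenult (i : Fin d) (hi : i ≠ ⟨d - 1, by omega⟩) : n i ≤ n ⟨d - 2, by omega⟩ :=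
    hmono.monotone (Nat.le_sub_one_of_lt (val_lt_of_ne_last hi))
  exact longFactorizationsUse_of_add_eq (fun i => by have := hmax i; omega) (tsub_self _)
    (tsub_pos_of_lt hlast) (fun i hi => tsub_le_tsub_left (hpenult i hi) _)
    (fun i hi => tsub_le_tsub_left (hsecond i hi) _)
    (tsub_lt_tsub_left_of_le (hmax _) hfirst) hg hc hj

end Shift

theorem statement19_general {d : ℕ} (hd : 1 < d) (n : Fin d → ℕ) (hmono : StrictMono n) (j : ℕ)
    (hpos : 0 < n ⟨0, by omega⟩ + j) (g c : ℕ)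
    (hg : g = (Finset.univ.filter (fun i : Fin d => (i : ℕ) < d - 1)).gcd
      (fun i => n ⟨d - 1, by omega⟩ - n i))
    (hc : c = sInf {c' : ℕ | ∀ x : ℕ, c' ≤ x →
      x ∈ gen (fun i : Fin d => (n ⟨d - 1, by omega⟩ - n i) / g)})
    (hj : (n ⟨d - 1, by omega⟩ - n ⟨0, by omega⟩) * (n ⟨d - 1, by omega⟩ - n ⟨1, by omega⟩) *
        (g * c + (n ⟨d - 1, by omega⟩ - n ⟨0, by omega⟩)) ≤
      (n ⟨d - 1, by omega⟩ + j) * (n ⟨d - 1, by omega⟩ - n ⟨d - 2, by omega⟩)) :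
    HomogSet (fun i => n i + j) (Apery (fun i => n i + j) (n ⟨0, by omega⟩ + j)) ∧
      Torsion (fun i => n i + j) ⟨0, by omega⟩ = ∅ := by
  have hdvd (i : Fin d) : g ∣ n ⟨d - 1, by omega⟩ - n i := by
    obtain rfl | hi := eq_or_ne i ⟨d - 1, by omega⟩
    · simp only [tsub_self, dvd_zero]
    · exact hg ▸ Finset.gcd_dvd ((Finset.mem_filter_univ i).mpr (val_lt_of_ne_last hi))
  have hconductor : Set.Ici c ⊆ gen fun i => (n ⟨d - 1, by omega⟩ - n i) / g := by
    have hlt : n ⟨0, by omega⟩ < n ⟨d - 1, by omega⟩ := hmono (Fin.mk_lt_mk.mpr (by omega))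
    rw [hc, hg]
    exact Ici_sInf_subset_gen_div_gcd
      ((Finset.mem_filter_univ _).mpr (Nat.sub_pos_of_lt hd)) (tsub_pos_of_lt hlt).ne'
  have hlong := longFactorizationsUse_add hd hmono hdvd hconductor hj
  exact ⟨hlong.homogSet_apery, hlong.torsion_eq_empty fun i =>
    hpos.trans_le (Nat.add_le_add_right (hmono.monotone (Nat.zero_le i)) j)⟩

/-- for `j > L`, the shifted semigroup `S+j` is homogeneous
and `T(S+j) = ∅` (its tangent cone is Cohen–Macaulay). -/
theorem statement19
    {d : ℕ} (hd : 2 ≤ d) (n : Fin d → ℕ)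
    (hmono : StrictMono n) (hpos : 0 < n ⟨0, by omega⟩)
    (hnum : IsNumerical n) (hmin : MinGen n)
    (g c : ℕ)
    (hg : g = (Finset.univ.filter (fun i : Fin d => (i : ℕ) < d - 1)).gcd
      (fun i => n ⟨d - 1, by omega⟩ - n i))
    (hc : c = sInf {c' : ℕ | ∀ x : ℕ, c' ≤ x →
      x ∈ gen (fun i : Fin d => (n ⟨d - 1, by omega⟩ - n i) / g)})
    (L : ℚ)
    (hL : L = ((n ⟨d - 1, by omega⟩ - n ⟨0, by omega⟩ : ℕ) : ℚ) *
        ((n ⟨d - 1, by omega⟩ - n ⟨1, by omega⟩ : ℕ) : ℚ) *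
        (((g : ℚ) * (c : ℚ) +
            (d : ℚ) * ((n ⟨d - 1, by omega⟩ - n ⟨0, by omega⟩ : ℕ) : ℚ)) /
            ((n ⟨d - 1, by omega⟩ - n ⟨d - 2, by omega⟩ : ℕ) : ℚ) + (d : ℚ)) -
        ((n ⟨d - 1, by omega⟩ : ℕ) : ℚ))
    (j : ℕ) (hj : L < (j : ℚ))
    :
    HomogSet (fun i => n i + j)
        (Apery (fun i => n i + j) (n ⟨0, by omega⟩ + j)) ∧
    Torsion (fun i => n i + j) ⟨0, by omega⟩ = ∅ := by
  refine statement19_general hd n hmono j (Nat.add_pos_left hpos j) g c hg hc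
    (mul_mul_add_le_of_rat_bound (d := d) (by omega)
      (tsub_pos_of_lt (hmono (Fin.mk_lt_mk.mpr (by omega)))) ?_)
  push_cast
  linarith
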